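/- Fix a set of goods M = {1,…,m} and let s be any feasible ex-post share for additive valuations over goods on M that is non-decreasing in the entitlement (b ≤ b' implies s(v,b) ≤ s(v,b')). Then for every additive valuation v over goods on M and every entitlement b with 0 < b ≤ 1, it holds that s(v,b) ≤ MMS(v, b̂). That is, the share MMS-hat, defined by (v,b) ↦ MMS(v, b̂), dominates every feasible ex-post share for goods. -/

import Mathlib

/-!
Put `k = ⌊1 / b⌋₊`, so that `1 ≤ k` and `b ≤ 1 / k`. By monotonicity `s v b ≤ s v (1 / k)`.
Feasibility on the instance of `k` identical agents, all with valuation `v` and entitlement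
`1 / k`, yields a partition into `k` bundles each worth at least `s v (1 / k)` under `v`. Its
least bundle value is at most the maximin share `MMSg v k`.
-/

open Finset

noncomputable section

/-- Value of a bundle under an additive valuation. -/
def bundleVal {m : ℕ} (v : Fin m → ℝ) (S : Finset (Fin m)) : ℝ := ∑ j ∈ S, v j

/-- A tuple of bundles partitions the items: pairwise disjoint and covering all items. -/
def IsPartition {n m : ℕ} (A : Fin n → Finset (Fin m)) : Prop :=
  (∀ i j : Fin n, i ≠ j → Disjoint (A i) (A j)) ∧ ∀ e : Fin m, ∃ i, e ∈ A i

/-- Maximin share `MMS(v, 1/k)` for an additive valuation over goods: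
the maximum over partitions into `k` bundles of the minimum bundle value. -/
def MMSg {m : ℕ} (v : Fin m → ℝ) (k : ℕ) : ℝ :=
  ⨆ P : {P : Fin k → Finset (Fin m) // IsPartition P}, ⨅ j : Fin k, bundleVal v (P.1 j)

/-- An ex-post share for goods is non-decreasing in the entitlement. -/
def GoodsShareMono (m : ℕ) (s : (Fin m → ℝ) → ℝ → ℝ) : Prop :=
  ∀ v : Fin m → ℝ, (∀ j, 0 ≤ v j) →
    ∀ b b' : ℝ, 0 < b → b ≤ b' → b' ≤ 1 → s v b ≤ s v b'

/-- An ex-post share for goods on `M = Fin m` is feasible if in every instance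
(of agents with additive valuations over goods and entitlements summing to 1)
some allocation gives every agent value at least her share. -/
def GoodsShareFeasible (m : ℕ) (s : (Fin m → ℝ) → ℝ → ℝ) : Prop :=
  ∀ n : ℕ, ∀ b : Fin n → ℝ, (∀ i, 0 < b i) → (∑ i, b i = 1) →
    ∀ v : Fin n → Fin m → ℝ, (∀ i j, 0 ≤ v i j) →
      ∃ A : Fin n → Finset (Fin m), IsPartition A ∧
        ∀ i, s (v i) (b i) ≤ bundleVal (v i) (A i)

/-- the share MMS-hat, given by (v,b) ↦ MMS(v, b̂) with b̂ = 1/⌊1/b⌋,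
dominates every feasible ex-post share for additive goods: every feasible share s
that is non-decreasing in the entitlement satisfies s(v,b) ≤ MMS(v, b̂). -/
theorem MMShat_dominates_feasible_goods (m : ℕ) (s : (Fin m → ℝ) → ℝ → ℝ)
    (hmono : GoodsShareMono m s) (hfeas : GoodsShareFeasible m s) :
    ∀ v : Fin m → ℝ, (∀ j, 0 ≤ v j) → ∀ b : ℝ, 0 < b → b ≤ 1 →
      s v b ≤ MMSg v ⌊1 / b⌋₊ := by
  intro v hv b hb0 hb1
  have hk : 1 ≤ ⌊1 / b⌋₊ := by
    rw [Nat.one_le_floor_iff, le_div_iff₀ hb0]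
    linarith
  have hfl : (⌊1 / b⌋₊ : ℝ) ≤ 1 / b := Nat.floor_le (by positivity)
  generalize ⌊1 / b⌋₊ = k at hk hfl ⊢
  have hk0 : (0 : ℝ) < k := by exact_mod_cast hk
  have hk1 : (1 : ℝ) ≤ k := by exact_mod_cast hk
  have hbk : b ≤ 1 / (k : ℝ) := by
    rw [le_div_iff₀ hb0] at hfl
    rw [le_div_iff₀ hk0]
    linarith
  -- The instance with `k` identical agents, each of entitlement `1 / k` and valuation `v`.
  obtain ⟨A, hA, hs⟩ := hfeas k (fun _ => 1 / (k : ℝ)) (fun _ => by positivity)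
    (by simp [hk0.ne']) (fun _ => v) (fun _ => hv)
  have : Nonempty (Fin k) := ⟨⟨0, hk⟩⟩
  calc s v b ≤ s v (1 / (k : ℝ)) :=
        hmono v hv b _ hb0 hbk (by rw [div_le_one hk0]; exact hk1)
    _ ≤ ⨅ j : Fin k, bundleVal v (A j) := le_ciInf hs
    _ ≤ MMSg v k :=
        -- There are finitely many partitions, so the supremum is not a junk value.
        le_ciSup (f := fun P : {P : Fin k → Finset (Fin m) // IsPartition P} =>
          ⨅ j : Fin k, bundleVal v (P.1 j)) (Set.finite_range _).bddAbove ⟨A, hA⟩
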